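/- Let (N, B, L) be a Hadamard triple in ℝ with #B < N, and let μ_{N,B} be the self-similar measure associated with (N,B), i.e., the unique Borel probability measure μ on ℝ satisfying μ = (1/#B) ∑_{b∈B} μ ∘ τ_b^{-1} where τ_b(x) = (x+b)/N. Then for any integers p_1, p_2, …, p_k ≥ 2 with gcd(p_1 p_2 ⋯ p_k, N) = 1, there exists a set Λ ⊂ ℝ such that for every tuple (n_1, n_2, …, n_k) ∈ ℕ_0^k, the set p_1^{n_1} p_2^{n_2} ⋯ p_k^{n_k} · Λ is a spectrum of μ_{N,B}. -/

import Mathlib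

open MeasureTheory ENNReal

/-- `(N,B,L)` is a Hadamard triple in `ℝ`. -/
def IsHadamardTriple (N : ℕ) (B L : Finset ℤ) : Prop :=
  2 ≤ N ∧ 2 ≤ B.card ∧ B.card = L.card ∧
    ∀ l ∈ L, ∀ l' ∈ L, l ≠ l' →
      ∑ b ∈ B, Complex.exp (2 * Real.pi * Complex.I * (b : ℂ) * ((l : ℂ) - (l' : ℂ)) / (N : ℂ)) = 0

/-- The exponential function `e_λ(x) = e^{2πiλx}`. -/
noncomputable def expFun (l : ℝ) : ℝ → ℂ :=
  fun x => Complex.exp (2 * Real.pi * Complex.I * (l : ℂ) * (x : ℂ))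

/-- `Λ` is a spectrum of `μ`: the family `{e^{2πiλx} : λ ∈ Λ}` forms an
orthonormal basis of `L²(μ)`. -/
def IsSpectrum (μ : Measure ℝ) (Λ : Set ℝ) : Prop :=
  ∃ F : Λ → Lp ℂ 2 μ,
    (∀ l : Λ, (F l : ℝ → ℂ) =ᵐ[μ] expFun (l : ℝ)) ∧
    Orthonormal ℂ F ∧
    (Submodule.span ℂ (Set.range F)).topologicalClosure = ⊤

open Filter
open scoped ComplexConjugate FourierTransform InnerProductSpace Topology

/-!
A zero of the mask at a point of `N⁻¹ℤ` is the vanishing of a sum of `N`-th roots of unity, so by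
Galois conjugation it persists when the point is multiplied by an integer `d` coprime to `N`. Hence
if `S ⊆ ℤ` gives orthogonal exponentials on the `n`-th approximation of `μ`, then so does `d • S`,
for all such `d` at once, and this survives adding multiples of `N ^ n` to the elements of `S`.

For each `d`, no `x` has `μ̂(d(x + k)) = 0` for all `k ∈ ℤ`: modulo `1`, such `x` form a finite set
that multiplication by `N` maps onto itself, hence injectively, whereas `#B < N` provides two
preimages of every point. By compactness the elements of `S` can be translated so that
`|μ̂(d l / N ^ n)|` is bounded below on `S`. Treating each of the countably many `d` at infinitely
many levels of an increasing tower of such sets, the Parseval identities of these levels pass to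
the limit by dominated convergence, so that the union of the tower is a spectrum after scaling by
any `d`.
-/

/-! ### Finiteness, compactness and limits -/

theorem injOn_of_subset_image {α : Type*} {s : Set α} (hs : s.Finite) {f : α → α}
    (h : s ⊆ f '' s) : Set.InjOn f s :=
  (Set.ncard_image_iff hs).1 <|
    (Set.ncard_image_le hs).antisymm (Set.ncard_le_ncard h (hs.image f))

theorem exists_pos_forall_exists_le_of_isCompact {X ι : Type*} [TopologicalSpace X] {K : Set X}
    (hK : IsCompact K) {g : ι → X → ℝ} (hg : ∀ i, Continuous (g i))
    (hpos : ∀ x ∈ K, ∃ i, 0 < g i x) : ∃ ε > 0, ∀ x ∈ K, ∃ i, ε ≤ g i x := by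
  let U : ℕ → Set X := fun n => ⋃ i, {x | 1 / (n + 1 : ℝ) < g i x}
  have hU_open (n : ℕ) : IsOpen (U n) := isOpen_iUnion fun i => isOpen_lt continuous_const (hg i)
  have hU_mono : Monotone U := fun m n hmn =>
    Set.iUnion_mono fun i _ hx => Set.mem_ofPred.2 ((Nat.one_div_le_one_div hmn).trans_lt hx)
  have hKU : K ⊆ ⋃ n, U n := fun x hx => by
    obtain ⟨i, hi⟩ := hpos x hx
    obtain ⟨n, hn⟩ := exists_nat_one_div_lt hi
    exact Set.mem_iUnion.2 ⟨n, Set.mem_iUnion.2 ⟨i, hn⟩⟩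
  obtain ⟨n, hn⟩ := hK.elim_directed_cover U hU_open hKU hU_mono.directed_le
  refine ⟨1 / (n + 1), Nat.one_div_pos_of_nat, fun x hx => ?_⟩
  obtain ⟨i, hi⟩ := Set.mem_iUnion.1 (hn hx)
  exact ⟨i, le_of_lt hi⟩

theorem finite_zeros_of_analyticOnNhd {𝕜 E : Type*} [NontriviallyNormedField 𝕜]
    [NormedAddCommGroup E] [NormedSpace 𝕜 E] {f : 𝕜 → E} {K : Set 𝕜} (hK : IsCompact K)
    (hK' : IsPreconnected K) (hf : AnalyticOnNhd 𝕜 f K) {x : 𝕜} (hx : x ∈ K) (hfx : f x ≠ 0) :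
    {y ∈ K | f y = 0}.Finite := by
  rcases hf.eqOn_zero_or_eventually_ne_zero_of_preconnected hK' with hzero | hne
  · exact absurd (hzero hx) hfx
  · exact (hK.finite_sdiff_of_mem_codiscreteWithin hne).subset
      fun y hy => ⟨hy.1, not_not_intro hy.2⟩

theorem exists_seq_forall_frequently_eq (α : Type*) [Countable α] [Nonempty α] :
    ∃ e : ℕ → α, ∀ a, ∃ᶠ i in atTop, e i = a := by
  obtain ⟨f, hf⟩ := exists_surjective_nat α
  refine ⟨fun i => f i.unpair.1, fun a => frequently_atTop.2 fun m => ?_⟩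
  obtain ⟨k, rfl⟩ := hf a
  exact ⟨Nat.pair k m, Nat.right_le_pair k m, by simp⟩

theorem tendsto_const_div_pow_atTop_nhds_zero {r : ℝ} (hr : 1 < r) (x : ℝ) :
    Tendsto (fun n : ℕ => x / r ^ n) atTop (𝓝 0) :=
  (tendsto_pow_atTop_atTop_of_one_lt hr).const_div_atTop x

theorem tsum_subtype_indicator_finset {α M : Type*} [AddCommMonoid M] [TopologicalSpace M]
    [T2Space M] {Λ : Set α} {s : Finset α} (hs : (s : Set α) ⊆ Λ) (f : α → M) :
    ∑' a : Λ, (s : Set α).indicator f a = ∑ a ∈ s, f a := by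
  rw [tsum_subtype Λ ((s : Set α).indicator f), Set.indicator_indicator,
    Set.inter_eq_self_of_subset_right hs, sum_eq_tsum_indicator]

/-! ### Orthonormal families -/

theorem mem_topologicalClosure_span_of_le_tsum {𝕜 E ι : Type*} [RCLike 𝕜]
    [NormedAddCommGroup E] [InnerProductSpace 𝕜 E] [CompleteSpace E] {v : ι → E}
    (hv : Orthonormal 𝕜 v) {x : E} (hx : ‖x‖ ^ 2 ≤ ∑' i, ‖⟪v i, x⟫_𝕜‖ ^ 2) :
    x ∈ (Submodule.span 𝕜 (Set.range v)).topologicalClosure := by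
  set K := (Submodule.span 𝕜 (Set.range v)).topologicalClosure
  have : CompleteSpace K := (Submodule.isClosed_topologicalClosure _).completeSpace_coe
  have hinner (i : ι) : ⟪v i, x⟫_𝕜 = ⟪v i, K.starProjection x⟫_𝕜 := by
    have hvi : v i ∈ K := Submodule.le_topologicalClosure _ (Submodule.subset_span ⟨i, rfl⟩)
    rw [← Submodule.inner_starProjection_left_eq_right,
      Submodule.starProjection_eq_self_iff.2 hvi]
  have hnorm : ‖x‖ ^ 2 ≤ ‖K.starProjection x‖ ^ 2 := by
    simp only [hinner] at hx
    exact hx.trans (hv.tsum_inner_products_le _)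
  exact K.mem_iff_norm_starProjection x |>.2 <|
    (K.norm_starProjection_apply_le x).antisymm
      ((sq_le_sq₀ (norm_nonneg _) (norm_nonneg _)).1 hnorm)

theorem sum_sq_norm_inner_of_card_eq_finrank {𝕜 E ι : Type*} [RCLike 𝕜] [NormedAddCommGroup E]
    [InnerProductSpace 𝕜 E] [FiniteDimensional 𝕜 E] [Fintype ι] {v : ι → E}
    (hv : Orthonormal 𝕜 v) (hcard : Fintype.card ι = Module.finrank 𝕜 E) (x : E) :
    ∑ i, ‖⟪v i, x⟫_𝕜‖ ^ 2 = ‖x‖ ^ 2 := by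
  have hspan := hv.linearIndependent.span_eq_top_of_card_eq_finrank' hcard
  simpa using (OrthonormalBasis.mk hv hspan.ge).sum_sq_norm_inner_right x

theorem sum_sq_norm_expSum_eq_one {ι κ : Type*} {s : Finset ι} {T : Finset κ} (hs : s.Nonempty)
    (hcard : T.card = s.card) {x : ι → ℝ} {y : κ → ℝ}
    (h : (T : Set κ).Pairwise fun k k' => ∑ i ∈ s, (𝐞 (x i * (y k' - y k)) : ℂ) = 0) (t : ℝ) :
    ∑ k ∈ T, ‖(s.card : ℂ)⁻¹ * ∑ i ∈ s, (𝐞 (x i * (t - y k)) : ℂ)‖ ^ 2 = 1 := by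
  let v : ℝ → EuclideanSpace ℂ s := fun r =>
    WithLp.toLp 2 fun i => ((√s.card)⁻¹ : ℝ) * (𝐞 (x i * r) : ℂ)
  have hpos : (0 : ℝ) < s.card := by exact_mod_cast hs.card_pos
  have hinner (r r' : ℝ) :
      ⟪v r, v r'⟫_ℂ = (s.card : ℂ)⁻¹ * ∑ i ∈ s, (𝐞 (x i * (r' - r)) : ℂ) := by
    have hsqrt : (((√s.card)⁻¹ : ℝ) : ℂ) * ((√s.card)⁻¹ : ℝ) = (s.card : ℂ)⁻¹ := by
      rw [← Complex.ofReal_mul, ← mul_inv, Real.mul_self_sqrt hpos.le, Complex.ofReal_inv,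
        Complex.ofReal_natCast]
    rw [PiLp.inner_apply, ← Finset.sum_coe_sort s, Finset.mul_sum]
    refine Finset.sum_congr rfl fun i _ => ?_
    rw [RCLike.inner_apply, map_mul, Complex.conj_ofReal, ← Circle.coe_inv_eq_conj,
      mul_mul_mul_comm, hsqrt, ← Circle.coe_mul, ← AddChar.map_neg_eq_inv,
      ← AddChar.map_add_eq_mul, ← sub_eq_add_neg, ← mul_sub]
  have hnorm (r : ℝ) : ‖v r‖ = 1 := by
    rw [← sq_eq_sq₀ (norm_nonneg _) zero_le_one, @norm_sq_eq_re_inner ℂ, hinner]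
    simp [hpos.ne']
  have hv : Orthonormal ℂ fun k : T => v (y k) := by
    refine ⟨fun _ => hnorm _, fun k k' hne => ?_⟩
    simp only [hinner, h k.2 k'.2 (Subtype.coe_injective.ne hne), mul_zero]
  have hparseval := sum_sq_norm_inner_of_card_eq_finrank hv (by simp [hcard]) (v t)
  rw [hnorm, one_pow] at hparseval
  rw [← hparseval, ← Finset.sum_coe_sort T]
  simp only [hinner]

/-! ### Primitive roots of unity -/

section PrimitiveRoot

variable {K : Type*} [Field K] [CharZero K] {n : ℕ} {ζ ξ : K}

theorem aeval_eq_zero_of_isPrimitiveRoot (hn : 0 < n) (hζ : IsPrimitiveRoot ζ n)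
    (hξ : IsPrimitiveRoot ξ n) {f : Polynomial ℤ} (hf : Polynomial.aeval ζ f = 0) :
    Polynomial.aeval ξ f = 0 := by
  have hdvd := minpoly.isIntegrallyClosed_dvd (hζ.isIntegral hn) hf
  rw [← Polynomial.cyclotomic_eq_minpoly hζ hn, Polynomial.cyclotomic_eq_minpoly hξ hn] at hdvd
  exact Polynomial.aeval_eq_zero_of_dvd_aeval_eq_zero hdvd (minpoly.aeval ℤ ξ)

theorem sum_zpow_eq_zero_of_isPrimitiveRoot {ι : Type*} (hn : 0 < n) (hζ : IsPrimitiveRoot ζ n)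
    (hξ : IsPrimitiveRoot ξ n) {s : Finset ι} {e : ι → ℤ} (h : ∑ i ∈ s, ζ ^ e i = 0) :
    ∑ i ∈ s, ξ ^ e i = 0 := by
  let f : Polynomial ℤ := ∑ i ∈ s, Polynomial.X ^ (e i % n).toNat
  have hf {η : K} (hη : IsPrimitiveRoot η n) :
      Polynomial.aeval η f = ∑ i ∈ s, η ^ e i := by
    simp only [f, map_sum, map_pow, Polynomial.aeval_X]
    refine Finset.sum_congr rfl fun i _ => ?_
    rw [← zpow_natCast, Int.toNat_of_nonneg (Int.emod_nonneg _ (by lia)), ← one_mul (η ^ _),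
      ← one_zpow (e i / n), ← hη.pow_eq_one, ← zpow_natCast, ← zpow_mul,
      ← zpow_add₀ (hη.ne_zero hn.ne'), Int.mul_ediv_add_emod]
  rw [← hf hξ]
  exact aeval_eq_zero_of_isPrimitiveRoot hn hζ hξ ((hf hζ).trans h)

end PrimitiveRoot

/-! ### Fourier transforms of measures -/

section CharFun

variable {E : Type*} [NormedAddCommGroup E] [InnerProductSpace ℝ E] [MeasurableSpace E]
  [BorelSpace E] [SecondCountableTopology E] {μ : Measure E}

theorem norm_charFun_sub_charFun_le [IsFiniteMeasure μ] (s t : E) :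
    ‖charFun μ s - charFun μ t‖ ≤ ∫ x, ‖Complex.exp (⟪x, s - t⟫_ℝ * Complex.I) - 1‖ ∂μ := by
  have hint (r : E) : Integrable (fun x => Complex.exp (⟪x, r⟫_ℝ * Complex.I)) μ :=
    .of_bound (by fun_prop) 1 (.of_forall fun x => (Complex.norm_exp_ofReal_mul_I _).le)
  rw [charFun_apply, charFun_apply, ← integral_sub (hint s) (hint t)]
  refine (norm_integral_le_integral_norm _).trans_eq (integral_congr_ae (.of_forall fun x => ?_))
  have hfactor : Complex.exp (⟪x, s⟫_ℝ * Complex.I) - Complex.exp (⟪x, t⟫_ℝ * Complex.I) =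
      Complex.exp (⟪x, t⟫_ℝ * Complex.I) *
        (Complex.exp (⟪x, s - t⟫_ℝ * Complex.I) - 1) := by
    rw [mul_sub, mul_one, ← Complex.exp_add, inner_sub_right]
    push_cast
    ring_nf
  simp only [hfactor, norm_mul, Complex.norm_exp_ofReal_mul_I, one_mul]

theorem uniformContinuous_charFun [IsFiniteMeasure μ] : UniformContinuous (charFun μ) := by
  let ω : E → ℝ := fun r => ∫ x, ‖Complex.exp (⟪x, r⟫_ℝ * Complex.I) - 1‖ ∂μ
  have hω : Continuous ω := by
    refine continuous_of_dominated (bound := fun _ => 2) (fun r => by fun_prop) (fun r => ?_)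
      (integrable_const _) (.of_forall fun x => by fun_prop)
    refine .of_forall fun x => (norm_norm _).trans_le ((norm_sub_le _ _).trans_eq ?_)
    rw [Complex.norm_exp_ofReal_mul_I, norm_one, one_add_one_eq_two]
  have hω_zero : Tendsto ω (𝓝 0) (𝓝 0) := by simpa [ω] using hω.tendsto 0
  refine Metric.uniformContinuous_iff.2 fun ε hε => ?_
  obtain ⟨δ, hδ, hωδ⟩ := Metric.eventually_nhds_iff.1 (hω_zero.eventually_lt_const hε)
  refine ⟨δ, hδ, fun s t hst => ?_⟩
  rw [dist_eq_norm]
  exact (norm_charFun_sub_charFun_le s t).trans_lt (hωδ (by rwa [dist_zero_right, ← dist_eq_norm]))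

variable [CompleteSpace E]

theorem ae_eq_zero_of_forall_integral_ofReal_mul_exp_eq_zero {g : E → ℝ} (hg : Integrable g μ)
    (h : ∀ t, ∫ x, g x * Complex.exp (⟪x, t⟫_ℝ * Complex.I) ∂μ = 0) : g =ᵐ[μ] 0 := by
  have hdensity {u : E → ℝ} (hu : Integrable u μ) :
      IsFiniteMeasure (μ.withDensity fun x => .ofReal (u x)) ∧
        AEMeasurable (fun x => ENNReal.ofReal (u x)) μ :=
    ⟨isFiniteMeasure_withDensity hu.lintegral_lt_top.ne, hu.aemeasurable.ennreal_ofReal⟩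
  obtain ⟨_, hpos⟩ := hdensity hg
  obtain ⟨_, hneg⟩ := hdensity hg.neg
  have hcharFun {u : E → ℝ} (hu : AEMeasurable (fun x => ENNReal.ofReal (u x)) μ) (t : E) :
      charFun (μ.withDensity fun x => .ofReal (u x)) t =
        ∫ x, (max (u x) 0 : ℝ) * Complex.exp (⟪x, t⟫_ℝ * Complex.I) ∂μ := by
    simp only [charFun_apply, integral_withDensity_eq_integral_toReal_smul₀ hu (by simp),
      ENNReal.toReal_ofReal', Complex.real_smul]
  have hint {u : E → ℝ} (hu : Integrable u μ) (t : E) :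
      Integrable (fun x => (max (u x) 0 : ℝ) * Complex.exp (⟪x, t⟫_ℝ * Complex.I)) μ :=
    hu.pos_part.ofReal.mul_bdd (c := 1) (by fun_prop)
      (.of_forall fun x => (Complex.norm_exp_ofReal_mul_I _).le)
  have heq : μ.withDensity (fun x => .ofReal (g x)) =
      μ.withDensity fun x => .ofReal ((-g) x) := by
    refine Measure.ext_of_charFun (funext fun t => ?_)
    rw [hcharFun hpos, hcharFun hneg, ← sub_eq_zero, ← integral_sub (hint hg t) (hint hg.neg t),
      ← h t]
    refine integral_congr_ae (.of_forall fun x => ?_)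
    simp only [← sub_mul, ← Complex.ofReal_sub, Pi.neg_apply, max_zero_sub_max_neg_zero_eq_self]
  filter_upwards [(withDensity_eq_iff hpos hneg hg.lintegral_lt_top.ne).1 heq] with x hx
  have hmax := congrArg ENNReal.toReal hx
  rw [ENNReal.toReal_ofReal', ENNReal.toReal_ofReal'] at hmax
  rw [Pi.zero_apply, ← max_zero_sub_max_neg_zero_eq_self (g x), sub_eq_zero]
  exact hmax

theorem re_ae_eq_zero_of_forall_integral_mul_exp_eq_zero {f : E → ℂ} (hf : Integrable f μ)
    (h : ∀ t, ∫ x, f x * Complex.exp (⟪x, t⟫_ℝ * Complex.I) ∂μ = 0) :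
    (fun x => (f x).re) =ᵐ[μ] 0 := by
  refine ae_eq_zero_of_forall_integral_ofReal_mul_exp_eq_zero hf.re fun t => ?_
  have hconj : ∫ x, conj (f x) * Complex.exp (⟪x, t⟫_ℝ * Complex.I) ∂μ = 0 := by
    rw [← map_zero conj, ← h (-t), ← integral_conj]
    simp [← Complex.exp_conj]
  have hint {u : E → ℂ} (hu : Integrable u μ) :
      Integrable (fun x => u x * Complex.exp (⟪x, t⟫_ℝ * Complex.I)) μ :=
    hu.mul_bdd (c := 1) (by fun_prop) (.of_forall fun x => (Complex.norm_exp_ofReal_mul_I _).le)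
  have hf_conj : Integrable (fun x => conj (f x)) μ :=
    (LinearIsometryEquiv.integrable_comp_iff Complex.conjLIE).2 hf
  calc ∫ x, ((f x).re : ℂ) * Complex.exp (⟪x, t⟫_ℝ * Complex.I) ∂μ
      = ∫ x, 2⁻¹ * (f x * Complex.exp (⟪x, t⟫_ℝ * Complex.I) +
          conj (f x) * Complex.exp (⟪x, t⟫_ℝ * Complex.I)) ∂μ := by
        refine integral_congr_ae (.of_forall fun x => ?_)
        simp only [Complex.re_eq_add_conj]
        ring
    _ = 0 := by rw [integral_const_mul, integral_add (hint hf) (hint hf_conj), h, hconj]; simp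

theorem ae_eq_zero_of_forall_integral_mul_exp_eq_zero {f : E → ℂ} (hf : Integrable f μ)
    (h : ∀ t, ∫ x, f x * Complex.exp (⟪x, t⟫_ℝ * Complex.I) ∂μ = 0) : f =ᵐ[μ] 0 := by
  have hre := re_ae_eq_zero_of_forall_integral_mul_exp_eq_zero hf h
  have him := re_ae_eq_zero_of_forall_integral_mul_exp_eq_zero (hf.const_mul Complex.I)
    fun t => by simp only [mul_assoc, integral_const_mul, h, mul_zero]
  filter_upwards [hre, him] with x hx_re hx_im
  exact Complex.ext hx_re (by simpa using hx_im)

end CharFun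

section FourierTransform

theorem expFun_eq_fourierChar (t x : ℝ) : expFun t x = 𝐞 (t * x) := by
  rw [Real.fourierChar_apply, expFun]
  push_cast
  ring_nf

/-- The Fourier transform `t ↦ ∫ e^{2πitx} dμ(x)` of a measure on `ℝ`, with the sign of `expFun`. -/
noncomputable def fourierTransform (μ : Measure ℝ) (t : ℝ) : ℂ := ∫ x, (𝐞 (t * x) : ℂ) ∂μ

theorem fourierTransform_eq_charFun (μ : Measure ℝ) (t : ℝ) :
    fourierTransform μ t = charFun μ (2 * Real.pi * t) := by
  rw [fourierTransform, charFun_apply_real]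
  refine integral_congr_ae (.of_forall fun x => ?_)
  simp only [Real.fourierChar_apply]
  push_cast
  ring_nf

theorem uniformContinuous_fourierTransform (μ : Measure ℝ) [IsFiniteMeasure μ] :
    UniformContinuous (fourierTransform μ) := by
  rw [funext (fourierTransform_eq_charFun μ)]
  exact uniformContinuous_charFun.comp (uniformContinuous_const_smul (2 * Real.pi))

theorem memLp_fourierChar (μ : Measure ℝ) [IsFiniteMeasure μ] (p : ℝ≥0∞) (t : ℝ) :
    MemLp (fun x => (𝐞 (t * x) : ℂ)) p μ :=
  .of_bound (by fun_prop) 1 (.of_forall fun _ => (Circle.norm_coe _).le)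

variable {μ : Measure ℝ}

/-- The exponential `x ↦ e^{2πitx}` as an element of `L²(μ)`. -/
noncomputable def expLp (μ : Measure ℝ) [IsFiniteMeasure μ] (t : ℝ) : Lp ℂ 2 μ :=
  (memLp_fourierChar μ 2 t).toLp

theorem coeFn_expLp [IsFiniteMeasure μ] (t : ℝ) : expLp μ t =ᵐ[μ] fun x => (𝐞 (t * x) : ℂ) :=
  (memLp_fourierChar μ 2 t).coeFn_toLp

theorem inner_expLp_left [IsFiniteMeasure μ] (t : ℝ) (f : Lp ℂ 2 μ) :
    ⟪expLp μ t, f⟫_ℂ = ∫ x, f x * 𝐞 (-(t * x)) ∂μ := by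
  rw [L2.inner_def]
  refine integral_congr_ae ?_
  filter_upwards [coeFn_expLp t] with x hx
  rw [hx, RCLike.inner_apply, AddChar.map_neg_eq_inv, Circle.coe_inv_eq_conj]

theorem inner_expLp_expLp [IsFiniteMeasure μ] (s t : ℝ) :
    ⟪expLp μ s, expLp μ t⟫_ℂ = fourierTransform μ (t - s) := by
  rw [inner_expLp_left]
  refine integral_congr_ae ?_
  filter_upwards [coeFn_expLp t] with x hx
  rw [hx, ← Circle.coe_mul, ← AddChar.map_add_eq_mul]
  ring_nf

theorem topologicalClosure_span_range_expLp [IsFiniteMeasure μ] :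
    (Submodule.span ℂ (Set.range (expLp μ))).topologicalClosure = ⊤ := by
  refine (Submodule.topologicalClosure_eq_top_iff).2 ((Submodule.eq_bot_iff _).2 fun f hf => ?_)
  rw [Lp.eq_zero_iff_ae_eq_zero]
  refine ae_eq_zero_of_forall_integral_mul_exp_eq_zero
    ((Lp.memLp f).integrable one_le_two) fun t => ?_
  have h := hf _ (Submodule.subset_span ⟨-(t / (2 * Real.pi)), rfl⟩)
  rw [inner_expLp_left] at h
  rw [← h]
  refine integral_congr_ae (.of_forall fun x => ?_)
  simp only [Real.fourierChar_apply, conj_trivial, RCLike.inner_apply]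
  congr 3
  push_cast
  field_simp

variable [IsProbabilityMeasure μ]

theorem fourierTransform_zero : fourierTransform μ 0 = 1 := by simp [fourierTransform]

theorem norm_expLp (t : ℝ) : ‖expLp μ t‖ = 1 := by
  rw [← sq_eq_sq₀ (norm_nonneg _) zero_le_one, @norm_sq_eq_re_inner ℂ, inner_expLp_expLp,
    sub_self, fourierTransform_zero]
  simp

variable {Λ : Set ℝ}

theorem orthonormal_expLp (h : Λ.Pairwise fun s t => fourierTransform μ (t - s) = 0) :
    Orthonormal ℂ fun l : Λ => expLp μ l :=
  ⟨fun _ => norm_expLp _, fun l l' hne => (inner_expLp_expLp _ _).trans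
    (h l.2 l'.2 (Subtype.coe_injective.ne hne))⟩

theorem summable_norm_fourierTransform_sq
    (h : Λ.Pairwise fun s t => fourierTransform μ (t - s) = 0) (t : ℝ) :
    Summable fun l : Λ => ‖fourierTransform μ (t - l)‖ ^ 2 := by
  simpa only [inner_expLp_expLp] using (orthonormal_expLp h).inner_products_summable (expLp μ t)

theorem isSpectrum_of_one_le_tsum (h : Λ.Pairwise fun s t => fourierTransform μ (t - s) = 0)
    (hsum : ∀ t, 1 ≤ ∑' l : Λ, ‖fourierTransform μ (t - l)‖ ^ 2) : IsSpectrum μ Λ := by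
  refine ⟨fun l => expLp μ l, fun l => ?_, orthonormal_expLp h, ?_⟩
  · rw [funext (expFun_eq_fourierChar l)]
    exact coeFn_expLp _
  · rw [eq_top_iff, ← topologicalClosure_span_range_expLp]
    refine Submodule.topologicalClosure_minimal _ (Submodule.span_le.2 ?_)
      (Submodule.isClosed_topologicalClosure _)
    rintro _ ⟨t, rfl⟩
    refine mem_topologicalClosure_span_of_le_tsum (orthonormal_expLp h) ?_
    simpa only [norm_expLp, one_pow, inner_expLp_expLp] using hsum t

end FourierTransform

/-! ### Masks -/

section Mask

variable {N : ℕ} {B : Finset ℤ}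

/-- The mask polynomial of the digit set `B`: the Fourier transform of the uniform probability
measure on `B`. -/
noncomputable def mask (B : Finset ℤ) (t : ℝ) : ℂ :=
  (B.card : ℂ)⁻¹ * ∑ b ∈ B, (𝐞 (b * t) : ℂ)

/-- The product `∏_{j=1}^n mask B (t / N^j)`: the Fourier transform of the `n`-th approximation
of the self-similar measure of `(N, B)`. -/
noncomputable def maskProd (N : ℕ) (B : Finset ℤ) (n : ℕ) (t : ℝ) : ℂ :=
  ∏ j ∈ Finset.range n, mask B (t / N ^ (j + 1))

theorem mask_zero (hB : B.Nonempty) : mask B 0 = 1 := by simp [mask, hB.card_ne_zero]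

theorem mask_add_intCast (t : ℝ) (k : ℤ) : mask B (t + k) = mask B t := by
  have h (b : ℤ) : 𝐞 (b * k) = 1 := by
    rw [← Int.cast_mul, Real.fourierChar_apply', Circle.exp_two_pi_mul_int]
  simp only [mask, mul_add, AddChar.map_add_eq_mul, h, mul_one]

theorem maskProd_zero (t : ℝ) : maskProd N B 0 t = 1 := rfl

theorem maskProd_succ (n : ℕ) (t : ℝ) :
    maskProd N B (n + 1) t = maskProd N B n t * mask B (t / N ^ (n + 1)) :=
  Finset.prod_range_succ _ _

theorem maskProd_apply_zero (hB : B.Nonempty) (n : ℕ) : maskProd N B n 0 = 1 := by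
  simp [maskProd, mask_zero hB]

theorem maskProd_add_pow_mul (hN : N ≠ 0) (n : ℕ) (t : ℝ) (k : ℤ) :
    maskProd N B n (t + N ^ n * k) = maskProd N B n t := by
  refine Finset.prod_congr rfl fun j hj => ?_
  obtain ⟨r, rfl⟩ := Nat.exists_eq_add_of_le (Finset.mem_range.1 hj)
  rw [← mask_add_intCast (t / N ^ (j + 1)) (N ^ r * k)]
  push_cast
  rw [Nat.succ_eq_add_one, pow_add]
  field_simp

theorem analyticAt_fourierChar (t : ℝ) : AnalyticAt ℝ (fun x => (𝐞 x : ℂ)) t := by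
  simp only [Real.fourierChar_apply]
  have h : AnalyticAt ℝ (fun x : ℝ => ((2 * Real.pi * x : ℝ) : ℂ) * Complex.I) t :=
    ((Complex.ofRealCLM.analyticAt _).comp (analyticAt_const.mul analyticAt_id)).mul
      analyticAt_const
  exact (analyticAt_cexp.restrictScalars (𝕜 := ℝ)).comp h

theorem analyticAt_mask (t : ℝ) : AnalyticAt ℝ (mask B) t :=
  analyticAt_const.mul <| Finset.analyticAt_fun_sum _ fun _ _ =>
    (analyticAt_fourierChar _).comp (by fun_prop)

theorem analyticAt_maskProd (n : ℕ) (t : ℝ) : AnalyticAt ℝ (maskProd N B n) t :=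
  Finset.analyticAt_fun_prod _ fun _ _ => (analyticAt_mask _).comp (by fun_prop)

theorem maskProd_eq_expSum (n : ℕ) (t : ℝ) :
    maskProd N B n t = ((Fintype.piFinset fun _ : Fin n => B).card : ℂ)⁻¹ *
      ∑ c ∈ Fintype.piFinset fun _ : Fin n => B,
        (𝐞 ((∑ j, (c j : ℝ) / N ^ (j + 1 : ℕ)) * t) : ℂ) := by
  have hchar (c : Fin n → ℤ) : (𝐞 ((∑ j, (c j : ℝ) / N ^ (j + 1 : ℕ)) * t) : ℂ) =
      ∏ j, (𝐞 (c j * (t / N ^ (j + 1 : ℕ))) : ℂ) := by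
    simp only [Real.fourierChar_apply, ← Complex.exp_sum, ← Finset.sum_mul, ← Complex.ofReal_sum,
      ← Finset.mul_sum]
    rw [Finset.sum_mul]
    congr! 5 with j
    ring
  simp only [hchar]
  rw [Finset.sum_prod_piFinset B fun (j : Fin n) (b : ℤ) => (𝐞 (b * (t / N ^ (j + 1 : ℕ))) : ℂ)]
  simp only [maskProd, mask, Finset.prod_mul_distrib, Fintype.card_piFinset_const,
    Finset.prod_const, Finset.card_range, inv_pow, Nat.cast_pow]
  rw [Finset.prod_range]

theorem sum_sq_norm_maskProd_eq_one (hB : B.Nonempty) {κ : Type*} {n : ℕ} {T : Finset κ}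
    (hcard : T.card = B.card ^ n) {y : κ → ℝ}
    (h : (T : Set κ).Pairwise fun k k' => maskProd N B n (y k' - y k) = 0) (t : ℝ) :
    ∑ k ∈ T, ‖maskProd N B n (t - y k)‖ ^ 2 = 1 := by
  have hne : (Fintype.piFinset fun _ : Fin n => B).Nonempty :=
    Fintype.piFinset_nonempty.2 fun _ => hB
  simp only [maskProd_eq_expSum] at h ⊢
  refine sum_sq_norm_expSum_eq_one hne (by simp [hcard]) (h.mono' fun k k' hkk' => ?_) t
  exact (mul_eq_zero.1 hkk').resolve_left (by simp [hB.ne_empty])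

end Mask

/-! ### Level spectra -/

section LevelSpectrum

variable {N n : ℕ} {B L S : Finset ℤ}

theorem IsHadamardTriple.nonempty_digits (h : IsHadamardTriple N B L) : B.Nonempty :=
  Finset.card_pos.1 (zero_lt_two.trans_le h.2.1)

theorem IsHadamardTriple.mask_eq_zero (h : IsHadamardTriple N B L) {d : ℤ}
    (hd : IsCoprime d (N : ℤ)) {l l' : ℤ} (hl : l ∈ L) (hl' : l' ∈ L) (hne : l ≠ l') :
    mask B (d * (l - l') / N) = 0 := by
  have hN : N ≠ 0 := (zero_lt_two.trans_le h.1).ne'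
  have hζ := Complex.isPrimitiveRoot_exp N hN
  have hξ := hζ.zpow_of_gcd_eq_one d (Int.isCoprime_iff_gcd_eq_one.1 hd)
  have hsum : ∑ b ∈ B, Complex.exp (2 * Real.pi * Complex.I / N) ^ (b * (l - l')) = 0 := by
    rw [← h.2.2.2 l hl l' hl' hne]
    refine Finset.sum_congr rfl fun b _ => ?_
    rw [← Complex.exp_int_mul]
    push_cast
    ring_nf
  have hsum' := sum_zpow_eq_zero_of_isPrimitiveRoot hN.bot_lt hζ hξ hsum
  rw [mask, mul_eq_zero_of_right]
  rw [← hsum']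
  refine Finset.sum_congr rfl fun b _ => ?_
  rw [← zpow_mul, ← Complex.exp_int_mul, Real.fourierChar_apply]
  push_cast
  ring_nf

/-- `S` is a spectrum of the `n`-th approximation of the self-similar measure of `(N, B)`, and so
is `d • S` for every `d` coprime to `N`. -/
structure IsLevelSpectrum (N : ℕ) (B : Finset ℤ) (n : ℕ) (S : Finset ℤ) : Prop where
  card_eq : S.card = B.card ^ n
  pairwise : ∀ d : ℤ, IsCoprime d (N : ℤ) →
    (S : Set ℤ).Pairwise fun l l' => maskProd N B n (d * (l' - l)) = 0

theorem isLevelSpectrum_image (hB : B.Nonempty) {α : Type*} {T : Finset α} {f : α → ℤ}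
    (hcard : T.card = B.card ^ n)
    (hpair : ∀ d : ℤ, IsCoprime d (N : ℤ) →
      (T : Set α).Pairwise fun a b => maskProd N B n (d * (f b - f a)) = 0) :
    IsLevelSpectrum N B n (T.image f) := by
  have hinj : Set.InjOn f T := fun a ha b hb hab => by
    by_contra hne
    have hzero := hpair 1 isCoprime_one_left ha hb hne
    simp [hab, maskProd_apply_zero hB] at hzero
  refine ⟨(Finset.card_image_of_injOn hinj).trans hcard, fun d hd => ?_⟩
  rw [Finset.coe_image, hinj.pairwise_image]
  exact hpair d hd

theorem isLevelSpectrum_singleton_zero : IsLevelSpectrum N B 0 {0} :=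
  ⟨by simp, fun d _ => by simp⟩

namespace IsLevelSpectrum

theorem image_add_pow_mul (hS : IsLevelSpectrum N B n S) (hN : N ≠ 0) (hB : B.Nonempty)
    (k : ℤ → ℤ) : IsLevelSpectrum N B n (S.image fun l => l + N ^ n * k l) := by
  refine isLevelSpectrum_image hB hS.card_eq fun d hd l hl l' hl' hne => ?_
  rw [← hS.pairwise d hd hl hl' hne, ← maskProd_add_pow_mul hN n _ (d * (k l' - k l))]
  push_cast
  ring_nf

theorem exists_superset_succ (hS : IsLevelSpectrum N B n S) (h : IsHadamardTriple N B L) :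
    ∃ S', S ⊆ S' ∧ IsLevelSpectrum N B (n + 1) S' := by
  have hN : N ≠ 0 := (zero_lt_two.trans_le h.1).ne'
  obtain ⟨c₀, hc₀⟩ : L.Nonempty := Finset.card_pos.1 (h.2.2.1 ▸ h.nonempty_digits.card_pos)
  refine ⟨(S ×ˢ L).image fun p => p.1 + N ^ n * (p.2 - c₀), fun s hs => Finset.mem_image.2
    ⟨(s, c₀), Finset.mk_mem_product hs hc₀, by simp⟩, isLevelSpectrum_image h.nonempty_digits
    (by rw [Finset.card_product, hS.card_eq, ← h.2.2.1, pow_succ]) ?_⟩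
  rintro d hd ⟨s, c⟩ hsc ⟨s', c'⟩ hsc' hne
  obtain ⟨hs, hc⟩ := Finset.mem_product.1 hsc
  obtain ⟨hs', hc'⟩ := Finset.mem_product.1 hsc'
  rw [maskProd_succ]
  by_cases hss' : s = s'
  · have hcc' : c' ≠ c := fun hcc' => hne (by rw [hss', hcc'])
    refine mul_eq_zero_of_right _ ?_
    rw [← h.mask_eq_zero hd hc' hc hcc', hss']
    congr 1
    push_cast
    field_simp
    ring
  · refine mul_eq_zero_of_left ?_ _
    rw [← hS.pairwise d hd hs hs' hss',
      ← maskProd_add_pow_mul hN n (d * (s' - s)) (d * (c' - c))]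
    push_cast
    ring_nf

theorem exists_superset_add (hS : IsLevelSpectrum N B n S) (h : IsHadamardTriple N B L) (m : ℕ) :
    ∃ S', S ⊆ S' ∧ IsLevelSpectrum N B (n + m) S' := by
  induction m with
  | zero => exact ⟨S, subset_rfl, hS⟩
  | succ m ih =>
    obtain ⟨T, hST, hT⟩ := ih
    obtain ⟨S', hTS', hS'⟩ := hT.exists_superset_succ h
    exact ⟨S', hST.trans hTS', hS'⟩

theorem sum_sq_norm_maskProd (hS : IsLevelSpectrum N B n S) (hB : B.Nonempty) {d : ℤ}
    (hd : IsCoprime d (N : ℤ)) (t : ℝ) : ∑ l ∈ S, ‖maskProd N B n (t - d * l)‖ ^ 2 = 1 :=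
  sum_sq_norm_maskProd_eq_one hB hS.card_eq
    (by simpa only [← mul_sub] using hS.pairwise d hd) t

end IsLevelSpectrum

theorem IsHadamardTriple.isLevelSpectrum_one (h : IsHadamardTriple N B L) :
    IsLevelSpectrum N B 1 L := by
  refine ⟨by rw [← h.2.2.1, pow_one], fun d hd l hl l' hl' hne => ?_⟩
  simp only [maskProd_succ, maskProd_zero, one_mul, zero_add, pow_one,
    h.mask_eq_zero hd hl' hl hne.symm]

theorem IsHadamardTriple.exists_mask_ne_zero (h : IsHadamardTriple N B L) {d : ℤ}
    (hd : IsCoprime d (N : ℤ)) (t : ℝ) : ∃ l ∈ L, mask B ((t - d * l) / N) ≠ 0 := by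
  by_contra! hzero
  have hsum := h.isLevelSpectrum_one.sum_sq_norm_maskProd h.nonempty_digits hd t
  rw [Finset.sum_eq_zero fun l hl => by simp [maskProd_succ, hzero l hl]] at hsum
  exact zero_ne_one hsum

theorem IsHadamardTriple.exists_mask_ne_zero_pair (h : IsHadamardTriple N B L)
    (hBN : B.card < N) {d : ℤ} (hd : IsCoprime d (N : ℤ)) (x : ℝ) :
    ∃ l l' : ℤ, ¬ (N : ℤ) ∣ l - l' ∧ mask B (d * ((x + l) / N)) ≠ 0 ∧
      mask B (d * ((x + l') / N)) ≠ 0 := by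
  have : NeZero N := ⟨(zero_lt_two.trans_le h.1).ne'⟩
  have hsurvive (a : ℤ) : ∃ c ∈ L, mask B (d * ((x + (a + c : ℤ)) / N)) ≠ 0 := by
    obtain ⟨c, hc, hne⟩ := h.exists_mask_ne_zero hd.neg_left (d * (x + a))
    refine ⟨c, hc, ?_⟩
    convert hne using 2
    push_cast
    ring
  -- If all survivors lay in one class modulo `N`, then varying `a` would make `L` meet every class.
  by_contra! hclass
  obtain ⟨c₀, -, hc₀⟩ := hsurvive 0
  have hsurj : Function.Surjective fun c : L => ((c : ℤ) : ZMod N) := fun r => by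
    obtain ⟨a, ha⟩ := ZMod.intCast_surjective ((c₀ : ZMod N) - r)
    obtain ⟨c, hc, hne⟩ := hsurvive a
    refine ⟨⟨c, hc⟩, ?_⟩
    have hdvd : (N : ℤ) ∣ a + c - (0 + c₀) := by
      by_contra hndvd
      exact hc₀ (hclass _ _ hndvd hne)
    have hcast := (ZMod.intCast_zmod_eq_zero_iff_dvd _ N).2 hdvd
    push_cast at hcast
    linear_combination hcast - ha
  have hle := Fintype.card_le_of_surjective _ hsurj
  rw [ZMod.card, Fintype.card_coe, ← h.2.2.1] at hle
  exact hBN.not_ge hle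

end LevelSpectrum

/-! ### Refinable functions -/

section Refinable

variable {N : ℕ} {B L : Finset ℤ} {φ : ℝ → ℂ}

/-- A uniformly continuous solution `φ` of the refinement equation with mask `mask B` and
dilation `N`, normalized at `0`. The Fourier transform of the self-similar measure of `(N, B)` is
one; no other property of that measure enters the construction of the spectrum. -/
structure IsRefinable (N : ℕ) (B : Finset ℤ) (φ : ℝ → ℂ) : Prop where
  uniformContinuous : UniformContinuous φ
  map_zero : φ 0 = 1
  map_eq : ∀ t, φ t = mask B (t / N) * φ (t / N)

theorem isRefinable_fourierTransform {μ : Measure ℝ} [IsProbabilityMeasure μ]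
    (hμ : μ = (B.card : ℝ≥0∞)⁻¹ • ∑ b ∈ B, μ.map fun x : ℝ => (x + b) / N) :
    IsRefinable N B (fourierTransform μ) := by
  refine ⟨uniformContinuous_fourierTransform μ, fourierTransform_zero, fun t => ?_⟩
  have hmeas (b : ℤ) : AEMeasurable (fun x : ℝ => (x + b) / N) μ := by fun_prop
  have (b : ℤ) : IsProbabilityMeasure (μ.map fun x : ℝ => (x + b) / N) :=
    Measure.isProbabilityMeasure_map (hmeas b)
  have hint (ν : Measure ℝ) [IsFiniteMeasure ν] : Integrable (fun x => (𝐞 (t * x) : ℂ)) ν :=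
    (memLp_fourierChar ν 1 t).integrable le_rfl
  have hbranch (b : ℤ) : ∫ x, (𝐞 (t * x) : ℂ) ∂μ.map (fun x : ℝ => (x + b) / N) =
      𝐞 (b * (t / N)) * fourierTransform μ (t / N) := by
    rw [integral_map (hmeas b) (hint _).aestronglyMeasurable, fourierTransform,
      ← integral_const_mul]
    refine integral_congr_ae (.of_forall fun x => ?_)
    simp only [← Circle.coe_mul, ← AddChar.map_add_eq_mul]
    ring_nf
  calc fourierTransform μ t
      = fourierTransform ((B.card : ℝ≥0∞)⁻¹ • ∑ b ∈ B, μ.map fun x : ℝ => (x + b) / N) t :=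
        congrArg (fourierTransform · t) hμ
    _ = (B.card : ℂ)⁻¹ * ∑ b ∈ B, 𝐞 (b * (t / N)) * fourierTransform μ (t / N) := by
        rw [fourierTransform, integral_smul_measure,
          integral_finsetSum_measure fun b _ => hint _]
        simp [hbranch]
    _ = mask B (t / N) * fourierTransform μ (t / N) := by
        rw [mask, mul_assoc, Finset.sum_mul]

/-- The points of the circle `ℝ/ℤ` over all of whose lifts `x` the function `x ↦ φ (d x)`
vanishes. -/
def commonZeros (φ : ℝ → ℂ) (d : ℤ) : Set UnitAddCircle :=
  {z | ∀ x : ℝ, (x : UnitAddCircle) = z → φ (d * x) = 0}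

theorem coe_mem_commonZeros {d : ℤ} {x : ℝ} :
    (x : UnitAddCircle) ∈ commonZeros φ d ↔ ∀ k : ℤ, φ (d * (x + k)) = 0 := by
  refine ⟨fun h k => h _ ?_, fun h y hy => ?_⟩
  · rw [AddCircle.coe_add, add_eq_left, AddCircle.coe_eq_zero_iff]
    exact ⟨k, by simp⟩
  · rw [eq_comm, ← sub_eq_zero, ← AddCircle.coe_sub, AddCircle.coe_eq_zero_iff] at hy
    obtain ⟨k, hk⟩ := hy
    rw [← h (-k)]
    congr 2
    rw [zsmul_one] at hk
    push_cast
    linarith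

namespace IsRefinable

theorem eq_maskProd_mul (hφ : IsRefinable N B φ) (n : ℕ) (t : ℝ) :
    φ t = maskProd N B n t * φ (t / N ^ n) := by
  induction n with
  | zero => simp [maskProd_zero]
  | succ n ih => rw [ih, hφ.map_eq, maskProd_succ, mul_assoc, div_div, ← pow_succ]

theorem tendsto_div_pow (hφ : IsRefinable N B φ) (hN : 1 < N) (t : ℝ) :
    Tendsto (fun n : ℕ => φ (t / N ^ n)) atTop (𝓝 1) := by
  rw [← hφ.map_zero]
  exact (hφ.uniformContinuous.continuous.tendsto 0).comp
    (tendsto_const_div_pow_atTop_nhds_zero (Nat.one_lt_cast.2 hN) t)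

theorem finite_commonZeros (hφ : IsRefinable N B φ) (hN : 1 < N) (hB : B.Nonempty) (d : ℤ) :
    (commonZeros φ d).Finite := by
  obtain ⟨r, hr, hne⟩ : ∃ r > 0, ∀ y, |y| < r → φ y ≠ 0 := by
    have hev : ∀ᶠ y in 𝓝 0, φ y ≠ 0 :=
      hφ.uniformContinuous.continuous.continuousAt.eventually_ne (by simp [hφ.map_zero])
    simpa [Metric.eventually_nhds_iff] using hev
  obtain ⟨n, hn⟩ : ∃ n : ℕ, |(d : ℝ)| / N ^ n < r :=
    ((tendsto_const_div_pow_atTop_nhds_zero (Nat.one_lt_cast.2 hN) |(d : ℝ)|).eventually_lt_const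
      hr).exists
  have hzeros : {y ∈ Set.Icc (0 : ℝ) 1 | maskProd N B n (d * y) = 0}.Finite :=
    finite_zeros_of_analyticOnNhd (𝕜 := ℝ) (x := 0) isCompact_Icc isPreconnected_Icc
      (fun y _ => (analyticAt_maskProd n _).comp (by fun_prop)) (by simp)
      (by simp [maskProd_apply_zero hB])
  refine (hzeros.image fun y : ℝ => (y : UnitAddCircle)).subset fun z hz => ?_
  obtain ⟨y, hy, rfl⟩ : z ∈ (fun y : ℝ => (y : UnitAddCircle)) '' Set.Icc 0 (0 + 1) := by
    rw [AddCircle.coe_image_Icc_eq]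
    trivial
  rw [zero_add] at hy
  have hzero := hz y rfl
  rw [hφ.eq_maskProd_mul n] at hzero
  refine ⟨y, ⟨hy, (mul_eq_zero.1 hzero).resolve_right (hne _ ?_)⟩, rfl⟩
  refine lt_of_le_of_lt ?_ hn
  rw [abs_div, abs_mul, abs_of_nonneg hy.1, abs_of_nonneg (by positivity : (0 : ℝ) ≤ N ^ n)]
  gcongr
  exact mul_le_of_le_one_right (abs_nonneg _) hy.2

theorem coe_add_div_mem_commonZeros (hφ : IsRefinable N B φ) (hN : N ≠ 0) {d : ℤ} {x : ℝ}
    (hx : (x : UnitAddCircle) ∈ commonZeros φ d) {l : ℤ} (hl : mask B (d * ((x + l) / N)) ≠ 0) :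
    (((x + l) / N : ℝ) : UnitAddCircle) ∈ commonZeros φ d := by
  refine coe_mem_commonZeros.2 fun k => ?_
  have hzero := coe_mem_commonZeros.1 hx (l + N * k)
  rw [hφ.map_eq, show d * (x + (l + N * k : ℤ)) / N = d * ((x + l) / N + k) by
    push_cast; field_simp; ring] at hzero
  refine (mul_eq_zero.1 hzero).resolve_left ?_
  rwa [mul_add, ← Int.cast_mul, mask_add_intCast]

/- Multiplication by `N` maps the finite set of common zeros onto itself, hence injectively; but
every common zero has at least two preimages in that set. -/
theorem commonZeros_eq_empty (hφ : IsRefinable N B φ) (h : IsHadamardTriple N B L)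
    (hBN : B.card < N) {d : ℤ} (hd : IsCoprime d (N : ℤ)) : commonZeros φ d = ∅ := by
  have hN : N ≠ 0 := (zero_lt_two.trans_le h.1).ne'
  have hchild (x : ℝ) (l : ℤ) : N • (((x + l) / N : ℝ) : UnitAddCircle) = x := by
    rw [← AddCircle.coe_nsmul, nsmul_eq_mul, mul_div_cancel₀ _ (Nat.cast_ne_zero.2 hN),
      AddCircle.coe_add, add_eq_left, AddCircle.coe_eq_zero_iff]
    exact ⟨l, by simp⟩
  have hinj : Set.InjOn (fun z : UnitAddCircle => N • z) (commonZeros φ d) := by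
    refine injOn_of_subset_image (hφ.finite_commonZeros h.1 h.nonempty_digits d) fun z hz => ?_
    obtain ⟨x, rfl⟩ := QuotientAddGroup.mk_surjective z
    obtain ⟨l, -, -, hl, -⟩ := h.exists_mask_ne_zero_pair hBN hd x
    exact ⟨_, hφ.coe_add_div_mem_commonZeros hN hz hl, hchild x l⟩
  refine Set.eq_empty_of_forall_notMem fun z hz => ?_
  obtain ⟨x, rfl⟩ := QuotientAddGroup.mk_surjective z
  obtain ⟨l, l', hndvd, hl, hl'⟩ := h.exists_mask_ne_zero_pair hBN hd x
  have heq := hinj (hφ.coe_add_div_mem_commonZeros hN hz hl)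
    (hφ.coe_add_div_mem_commonZeros hN hz hl') ((hchild x l).trans (hchild x l').symm)
  rw [← sub_eq_zero, ← AddCircle.coe_sub, AddCircle.coe_eq_zero_iff] at heq
  obtain ⟨k, hk⟩ := heq
  refine hndvd ⟨k, ?_⟩
  rw [zsmul_one] at hk
  field_simp at hk
  have hk' : (l - l' : ℝ) = N * k := by linarith
  exact_mod_cast hk'

theorem exists_pos_forall_exists_le_norm (hφ : IsRefinable N B φ) (h : IsHadamardTriple N B L)
    (hBN : B.card < N) {d : ℤ} (hd : IsCoprime d (N : ℤ)) :
    ∃ ε > 0, ∀ x : ℝ, ∃ k : ℤ, ε ≤ ‖φ (d * (x + k))‖ := by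
  have hcont := hφ.uniformContinuous.continuous
  obtain ⟨ε, hε, hle⟩ := exists_pos_forall_exists_le_of_isCompact
    (g := fun (k : ℤ) (x : ℝ) => ‖φ (d * (x + k))‖) (isCompact_Icc (a := (0 : ℝ)) (b := 1))
    (fun k => by fun_prop) fun x _ => by
      by_contra! hzero
      have hx : (x : UnitAddCircle) ∈ commonZeros φ d :=
        coe_mem_commonZeros.2 fun k => norm_le_zero_iff.1 (hzero k)
      rwa [hφ.commonZeros_eq_empty h hBN hd] at hx
  refine ⟨ε, hε, fun x => ?_⟩
  obtain ⟨k, hk⟩ := hle (Int.fract x) ⟨Int.fract_nonneg x, (Int.fract_lt_one x).le⟩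
  refine ⟨k - ⌊x⌋, ?_⟩
  rwa [Int.fract, show x - ⌊x⌋ + k = x + (k - ⌊x⌋ : ℤ) by push_cast; ring] at hk

end IsRefinable

end Refinable

/-! ### Spectral towers -/

section SpectralTower

variable {N n : ℕ} {B L S : Finset ℤ} {φ : ℝ → ℂ}

namespace IsRefinable

theorem exists_superset_forall_le_norm (hφ : IsRefinable N B φ) (h : IsHadamardTriple N B L)
    {d : ℤ} {ε : ℝ} (hε : ε < 1) (hle : ∀ x : ℝ, ∃ k : ℤ, ε ≤ ‖φ (d * (x + k))‖)
    (hS : IsLevelSpectrum N B n S) :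
    ∃ n' S', n < n' ∧ S ⊆ S' ∧ IsLevelSpectrum N B n' S' ∧
      ∀ l ∈ S', ε ≤ ‖φ (d * l / N ^ n')‖ := by
  have hN : N ≠ 0 := (zero_lt_two.trans_le h.1).ne'
  have hsmall : ∀ᶠ n' : ℕ in atTop, ∀ l ∈ S, ε ≤ ‖φ (d * l / N ^ n')‖ :=
    S.eventually_all.2 fun l _ =>
      (hφ.tendsto_div_pow h.1 (d * l)).norm.eventually_const_le (by simpa using hε)
  obtain ⟨n', hn', hlt⟩ := (hsmall.and (eventually_gt_atTop n)).exists
  obtain ⟨m, rfl⟩ := Nat.exists_eq_add_of_le hlt.le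
  obtain ⟨T, hST, hT⟩ := hS.exists_superset_add h m
  choose κ hκ using hle
  refine ⟨n + m, _, hlt, fun l hl => Finset.mem_image.2 ⟨l, hST hl, by simp [hl]⟩,
    hT.image_add_pow_mul hN h.nonempty_digits fun l => if l ∈ S then 0 else κ (l / N ^ (n + m)), ?_⟩
  simp only [Finset.forall_mem_image]
  intro l _
  split_ifs with hl
  · simpa using hn' l hl
  · convert hκ (l / N ^ (n + m)) using 3
    push_cast
    field_simp

theorem tendsto_maskProd (hφ : IsRefinable N B φ) (hN : 1 < N) (t : ℝ) :
    Tendsto (fun n => maskProd N B n t) atTop (𝓝 (φ t)) := by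
  have hlim := hφ.tendsto_div_pow hN t
  have hquot := (tendsto_const_nhds (x := φ t)).div hlim one_ne_zero
  rw [div_one] at hquot
  refine hquot.congr' ?_
  filter_upwards [hlim.eventually_ne one_ne_zero] with n hne
  exact (eq_div_of_mul_eq hne (hφ.eq_maskProd_mul n t).symm).symm

theorem sq_norm_maskProd_le (hφ : IsRefinable N B φ) {ε : ℝ} (hε : 0 < ε) {t : ℝ}
    (ht : ε ≤ ‖φ (t / N ^ n)‖) : ‖maskProd N B n t‖ ^ 2 ≤ (ε ^ 2)⁻¹ * ‖φ t‖ ^ 2 := by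
  rw [hφ.eq_maskProd_mul n t, norm_mul, mul_pow, ← div_eq_inv_mul, le_div_iff₀ (by positivity)]
  gcongr

theorem eventually_forall_half_le_norm (hφ : IsRefinable N B φ) (hN : 1 < N) {ε : ℝ} (hε : 0 < ε)
    (t : ℝ) : ∀ᶠ n : ℕ in atTop, ∀ y : ℝ, ε ≤ ‖φ (y / N ^ n)‖ → ε / 2 ≤ ‖φ ((t + y) / N ^ n)‖ := by
  obtain ⟨δ, hδ, hclose⟩ := Metric.uniformContinuous_iff.1 hφ.uniformContinuous _ (half_pos hε)
  filter_upwards [Metric.tendsto_nhds.1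
    (tendsto_const_div_pow_atTop_nhds_zero (Nat.one_lt_cast.2 hN) t) δ hδ] with n hn y hy
  have hdist := hclose (show dist (y / N ^ n) ((t + y) / N ^ n : ℝ) < δ by
    rwa [add_div, dist_comm, dist_eq_norm, add_sub_cancel_right, ← dist_zero_right])
  rw [dist_eq_norm] at hdist
  linarith [norm_le_insert' (φ (y / N ^ n)) (φ ((t + y) / N ^ n))]

end IsRefinable

/-- An increasing tower of level spectra such that, for every `d` coprime to `N`, infinitely many
of its levels `S` satisfy a uniform lower bound on `φ` along the rescaled set `(d / N ^ n) • S`.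
The union of the tower is the spectrum sought. -/
structure IsSpectralTower (N : ℕ) (B : Finset ℤ) (φ : ℝ → ℂ) (n : ℕ → ℕ) (S : ℕ → Finset ℤ) :
    Prop where
  strictMono : StrictMono n
  monotone : Monotone S
  isLevelSpectrum : ∀ i, IsLevelSpectrum N B (n i) (S i)
  frequently_le_norm : ∀ d : ℤ, IsCoprime d (N : ℤ) →
    ∃ ε > 0, ∃ᶠ i in atTop, ∀ l ∈ S i, ε ≤ ‖φ (d * l / N ^ n i)‖

theorem IsRefinable.exists_isSpectralTower (hφ : IsRefinable N B φ) (h : IsHadamardTriple N B L)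
    (hBN : B.card < N) : ∃ n S, IsSpectralTower N B φ n S := by
  let D := {d : ℤ // IsCoprime d (N : ℤ)}
  have : Nonempty D := ⟨⟨1, isCoprime_one_left⟩⟩
  have hbound (d : D) : ∃ ε > 0, ε < 1 ∧ ∀ x : ℝ, ∃ k : ℤ, ε ≤ ‖φ (d * (x + k))‖ := by
    obtain ⟨ε, hε, hle⟩ := hφ.exists_pos_forall_exists_le_norm h hBN d.2
    exact ⟨min ε (1 / 2), by positivity, (min_le_right _ _).trans_lt one_half_lt_one,
      fun x => (hle x).imp fun _ => (min_le_left _ _).trans⟩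
  choose ε hε hε_lt hle using hbound
  have hstep (d : D) (s : {p : ℕ × Finset ℤ // IsLevelSpectrum N B p.1 p.2}) :
      ∃ s' : {p : ℕ × Finset ℤ // IsLevelSpectrum N B p.1 p.2}, s.1.1 < s'.1.1 ∧
        s.1.2 ⊆ s'.1.2 ∧ ∀ l ∈ s'.1.2, ε d ≤ ‖φ (d * l / N ^ s'.1.1)‖ := by
    obtain ⟨n', S', hlt, hsub, hS', hnorm⟩ :=
      hφ.exists_superset_forall_le_norm h (hε_lt d) (hle d) s.2
    exact ⟨⟨(n', S'), hS'⟩, hlt, hsub, hnorm⟩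
  choose next hlt hsub hnorm using hstep
  obtain ⟨e, he⟩ := exists_seq_forall_frequently_eq D
  let s : ℕ → {p : ℕ × Finset ℤ // IsLevelSpectrum N B p.1 p.2} :=
    fun i => i.rec ⟨(0, {0}), isLevelSpectrum_singleton_zero⟩ fun j => next (e j)
  refine ⟨fun i => (s i).1.1, fun i => (s i).1.2, strictMono_nat_of_lt_succ fun i => hlt _ _,
    monotone_nat_of_le_succ fun i => hsub _ _, fun i => (s i).2, fun d hd => ⟨ε ⟨d, hd⟩, hε _, ?_⟩⟩
  refine (tendsto_add_atTop_nat 1).frequently ((he ⟨d, hd⟩).mono fun i hi => ?_)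
  have hs : s (i + 1) = next ⟨d, hd⟩ (s i) := congrArg (next · (s i)) hi
  rw [hs]
  exact hnorm ⟨d, hd⟩ (s i)

namespace IsSpectralTower

variable {n : ℕ → ℕ} {S : ℕ → Finset ℤ}

theorem pairwise_eq_zero (hT : IsSpectralTower N B φ n S) (hφ : IsRefinable N B φ) {d : ℤ}
    (hd : IsCoprime d (N : ℤ)) :
    (⋃ i, (S i : Set ℤ)).Pairwise fun l l' => φ (d * (l' - l)) = 0 := by
  have hmono : Monotone fun i => (S i : Set ℤ) := fun _ _ hij =>
    Finset.coe_subset.2 (hT.monotone hij)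
  refine (Set.pairwise_iUnion hmono.directed_le).2 fun i l hl l' hl' hne => ?_
  rw [hφ.eq_maskProd_mul (n i), (hT.isLevelSpectrum i).pairwise d hd hl hl' hne, zero_mul]

/- Dominated convergence in the Parseval identities of the levels at which `φ` is bounded below. -/
theorem tsum_sq_norm_eq_one (hT : IsSpectralTower N B φ n S) (hφ : IsRefinable N B φ) (hN : 1 < N)
    (hB : B.Nonempty) {d : ℤ} (hd : IsCoprime d (N : ℤ)) (t : ℝ)
    (hsum : Summable fun l : ⋃ i, (S i : Set ℤ) => ‖φ (t - d * (l : ℤ))‖ ^ 2) :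
    ∑' l : ⋃ i, (S i : Set ℤ), ‖φ (t - d * (l : ℤ))‖ ^ 2 = 1 := by
  obtain ⟨ε, hε, hfreq⟩ := hT.frequently_le_norm (-d) hd.neg_left
  let Q : ℕ → ℤ → ℝ := fun i =>
    (S i : Set ℤ).indicator fun l => ‖maskProd N B (n i) (t - d * l)‖ ^ 2
  have hparseval (i : ℕ) : ∑' l : ⋃ i, (S i : Set ℤ), Q i l = 1 :=
    (tsum_subtype_indicator_finset (Set.subset_iUnion (fun i => (S i : Set ℤ)) i) _).trans
      ((hT.isLevelSpectrum i).sum_sq_norm_maskProd hB hd t)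
  have hlim (l : ⋃ i, (S i : Set ℤ)) :
      Tendsto (fun i => Q i l) atTop (𝓝 (‖φ (t - d * (l : ℤ))‖ ^ 2)) := by
    obtain ⟨j, hj⟩ := Set.mem_iUnion.1 l.2
    refine (((hφ.tendsto_maskProd hN _).comp hT.strictMono.tendsto_atTop).norm.pow 2).congr' ?_
    filter_upwards [eventually_ge_atTop j] with i hi
    have hl : (l : ℤ) ∈ (S i : Set ℤ) := hT.monotone hi hj
    simp only [Q, Set.indicator_of_mem hl, Function.comp_apply]
  let F := atTop ⊓ 𝓟 {i | ∀ l ∈ S i, ε ≤ ‖φ ((-d : ℤ) * l / N ^ n i)‖}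
  have : F.NeBot := frequently_iff_neBot.1 hfreq
  have hdom : ∀ᶠ i in F, ∀ l : ⋃ i, (S i : Set ℤ),
      ‖Q i l‖ ≤ ((ε / 2) ^ 2)⁻¹ * ‖φ (t - d * (l : ℤ))‖ ^ 2 := by
    have hhalf := (hT.strictMono.tendsto_atTop.mono_left inf_le_left : Tendsto n F atTop).eventually
      (hφ.eventually_forall_half_le_norm hN hε t)
    filter_upwards [hhalf, mem_inf_of_right (mem_principal_self _)] with i hi hbound l
    by_cases hl : (l : ℤ) ∈ (S i : Set ℤ)
    · simp only [Q, Set.indicator_of_mem hl, norm_pow, norm_norm]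
      refine hφ.sq_norm_maskProd_le (half_pos hε) ?_
      simpa [sub_eq_add_neg] using hi _ (hbound l hl)
    · simp only [Q, Set.indicator_of_notMem hl, norm_zero]
      positivity
  have htannery := tendsto_tsum_of_dominated_convergence (hsum.mul_left _)
    (fun l => (hlim l).mono_left inf_le_left) hdom
  simp only [hparseval] at htannery
  exact tendsto_nhds_unique htannery tendsto_const_nhds

end IsSpectralTower

end SpectralTower

/-! ### The common spectrum -/

theorem simultaneous_scaled_spectra_general {N : ℕ} {B L : Finset ℤ} (h : IsHadamardTriple N B L)
    (hBN : B.card < N) {μ : Measure ℝ} [IsProbabilityMeasure μ]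
    (hμ : μ = (B.card : ℝ≥0∞)⁻¹ • ∑ b ∈ B, μ.map fun x : ℝ => (x + b) / N) :
    ∃ Λ : Set ℤ, ∀ d : ℤ, IsCoprime d (N : ℤ) →
      IsSpectrum μ ((fun l : ℤ => (d * l : ℝ)) '' Λ) := by
  have hφ := isRefinable_fourierTransform hμ
  obtain ⟨n, S, hT⟩ := hφ.exists_isSpectralTower h hBN
  refine ⟨⋃ i, (S i : Set ℤ), fun d hd => ?_⟩
  have hd0 : (d : ℝ) ≠ 0 := Int.cast_ne_zero.2 <| by
    rintro rfl
    have hunit := Int.isUnit_iff_natAbs_eq.1 (isCoprime_zero_left.1 hd)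
    have := h.1
    omega
  have hinj : Function.Injective fun l : ℤ => (d * l : ℝ) :=
    (mul_right_injective₀ hd0).comp Int.cast_injective
  have hpair : ((fun l : ℤ => (d * l : ℝ)) '' ⋃ i, (S i : Set ℤ)).Pairwise
      fun s t => fourierTransform μ (t - s) = 0 := by
    rw [hinj.injOn.pairwise_image]
    exact (hT.pairwise_eq_zero hφ hd).mono' fun l l' hll' => by rwa [Function.onFun, ← mul_sub]
  refine isSpectrum_of_one_le_tsum hpair fun t => ?_
  have hsum := summable_norm_fourierTransform_sq hpair t
  rw [← (Equiv.Set.image _ _ hinj).summable_iff] at hsum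
  rw [tsum_image (fun x : ℝ => ‖fourierTransform μ (t - x)‖ ^ 2) hinj.injOn]
  exact (hT.tsum_sq_norm_eq_one hφ h.1 h.nonempty_digits hd t hsum).ge

theorem simultaneous_scaled_spectra (N : ℕ) (B L : Finset ℤ)
    (h : IsHadamardTriple N B L) (hBN : B.card < N)
    (μ : Measure ℝ) [IsProbabilityMeasure μ]
    (hμ : μ = (B.card : ℝ≥0∞)⁻¹ •
      ∑ b ∈ B, Measure.map (fun x : ℝ => (x + (b : ℝ)) / (N : ℝ)) μ)
    (k : ℕ) (hk : 1 ≤ k) (p : Fin k → ℕ) (hp : ∀ i, 2 ≤ p i)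
    (hcop : Nat.Coprime (∏ i, p i) N) :
    ∃ Λ : Set ℝ, ∀ n : Fin k → ℕ,
      IsSpectrum μ ((fun x : ℝ => (∏ i, (p i : ℝ) ^ (n i)) * x) '' Λ) := by
  obtain ⟨Λ, hΛ⟩ := simultaneous_scaled_spectra_general h hBN hμ
  refine ⟨(↑) '' Λ, fun n => ?_⟩
  have hd : Nat.Coprime (∏ i, p i ^ n i) N :=
    Nat.Coprime.prod_left fun i hi =>
      (hcop.coprime_dvd_left (Finset.dvd_prod_of_mem p hi)).pow_left _
  simpa [Set.image_image] using hΛ _ (Nat.isCoprime_iff_coprime.2 hd)
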